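/- Let B ≥ 1 and λ ∈ ℝ with 0 ≤ λ ≤ 1, and let Λ be the (B+1)×(B+1) matrix defined in the context. Then the convergence of Λ^m above the last row is geometric: for all indices j < B and l ∈ {0,…,B}, and every natural number m with m ≥ B and m ≥ 1, the entry satisfies 0 ≤ (Λ^m)_{j,l} ≤ m^B · (1−λ)^{m−B}. -/

import Mathlib

open Matrix Filter

/-- The `(B+1) × (B+1)` transition matrix `Λ`: diagonal entries `1 - λ` (except the
last one, which is `1`), subdiagonal entries `λ`, all other entries `0`. -/
def Lam (B : ℕ) (lam : ℝ) : Matrix (Fin (B+1)) (Fin (B+1)) ℝ :=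
  Matrix.of fun j l =>
    if (j : ℕ) = (l : ℕ) then (if (j : ℕ) < B then 1 - lam else 1)
    else if (j : ℕ) = (l : ℕ) + 1 then lam
    else 0

/-!
Above its last row, `Λ` is the `(B+1) × (B+1)` matrix `(1 - λ) I + λ N`, where `N` is the shift
with ones on the subdiagonal. These rows vanish in the last column, so they are never fed by the
last row when taking powers, and the agreement persists. The binomial theorem then gives
`(Λ^m)_{j,l} = C(m, k) λ^k (1 - λ)^(m-k)` with `k = j - l ≥ 0`, and `0` for `l > j`.
-/

theorem choose_mul_pow_mul_pow_le {R : Type*} [CommSemiring R] [PartialOrder R]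
    [IsOrderedRing R] {a b : R} (ha₀ : 0 ≤ a) (ha₁ : a ≤ 1) (hb₀ : 0 ≤ b) (hb₁ : b ≤ 1)
    {m k d : ℕ} (hm : 1 ≤ m) (hk : k ≤ d) :
    m.choose k * a ^ k * b ^ (m - k) ≤ (m : R) ^ d * b ^ (m - d) := by
  have hchoose : (m.choose k : R) ≤ (m : R) ^ d := by
    rw [← Nat.cast_pow]
    exact Nat.mono_cast ((Nat.choose_le_pow m k).trans (Nat.pow_le_pow_right hm hk))
  calc m.choose k * a ^ k * b ^ (m - k)
      ≤ m.choose k * 1 * b ^ (m - k) := by gcongr; exact pow_le_one₀ ha₀ ha₁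
    _ = m.choose k * b ^ (m - k) := by rw [mul_one]
    _ ≤ (m : R) ^ d * b ^ (m - d) :=
      mul_le_mul hchoose (pow_le_pow_of_le_one hb₀ hb₁ (by lia)) (by positivity) (by positivity)

theorem smul_one_add_smul_pow {R A : Type*} [CommSemiring R] [Semiring A] [Algebra R A]
    (a b : R) (x : A) (m : ℕ) :
    (a • 1 + b • x) ^ m =
      ∑ k ∈ Finset.range (m + 1), (m.choose k * b ^ k * a ^ (m - k)) • x ^ k := by
  have hcomm : Commute (b • x) (a • (1 : A)) := (Commute.one_right _).smul_right a
  rw [add_comm, hcomm.add_pow]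
  refine Finset.sum_congr rfl fun k _ => ?_
  calc (b • x) ^ k * (a • (1 : A)) ^ (m - k) * m.choose k
      = (m.choose k : R) • a ^ (m - k) • b ^ k • x ^ k := by
        rw [smul_pow, smul_pow, one_pow, mul_smul_one, ← nsmul_eq_mul', Nat.cast_smul_eq_nsmul]
    _ = (m.choose k * b ^ k * a ^ (m - k)) • x ^ k := by
        rw [smul_smul, smul_smul, mul_right_comm, mul_assoc]

theorem pow_apply_eq_of_rows_eq {ι R : Type*} [Fintype ι] [DecidableEq ι] [Semiring R]
    {M N : Matrix ι ι R} {s : Set ι} (hMN : ∀ i ∈ s, ∀ k, M i k = N i k)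
    (hs : ∀ i ∈ s, ∀ k ∉ s, M i k = 0) (m : ℕ) {i : ι} (hi : i ∈ s) (l : ι) :
    (M ^ m) i l = (N ^ m) i l := by
  induction m generalizing i with
  | zero => rw [pow_zero, pow_zero]
  | succ m ih =>
    rw [pow_succ', pow_succ', mul_apply, mul_apply]
    refine Finset.sum_congr rfl fun k _ => ?_
    rw [← hMN i hi k]
    by_cases hk : k ∈ s
    · rw [ih hk]
    · rw [hs i hi k hk, zero_mul, zero_mul]

/-- The nilpotent shift matrix, with ones on the subdiagonal and zeros elsewhere; the off-diagonal
part of a lower bidiagonal Toeplitz matrix. -/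
def lowerShift (R : Type*) [Zero R] [One R] (n : ℕ) : Matrix (Fin n) (Fin n) R :=
  of fun j l => if (j : ℕ) = l + 1 then 1 else 0

theorem lowerShift_apply {R : Type*} [Zero R] [One R] {n : ℕ} (j l : Fin n) :
    lowerShift R n j l = if (j : ℕ) = l + 1 then 1 else 0 :=
  rfl

theorem lowerShift_pow_apply {R : Type*} [Semiring R] {n : ℕ} (k : ℕ) (j l : Fin n) :
    (lowerShift R n ^ k) j l = if (j : ℕ) = l + k then 1 else 0 := by
  induction k generalizing l with
  | zero => simp only [pow_zero, one_apply, Fin.ext_iff, add_zero]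
  | succ k ih =>
    simp only [pow_succ, mul_apply, ih, lowerShift_apply, ite_mul, one_mul, zero_mul]
    by_cases hl : (l : ℕ) + 1 < n
    · rw [Finset.sum_eq_single ⟨l + 1, hl⟩ (by grind) (by simp)]
      grind
    · rw [Finset.sum_eq_zero (by grind), if_neg (by lia)]

theorem smul_one_add_smul_lowerShift_pow_apply {R : Type*} [CommSemiring R] {n : ℕ} (a b : R)
    (m : ℕ) (j l : Fin n) :
    ((a • 1 + b • lowerShift R n) ^ m) j l =
      if l ≤ j then m.choose (j - l) * b ^ (j - l : ℕ) * a ^ (m - (j - l)) else 0 := by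
  simp only [smul_one_add_smul_pow, Matrix.sum_apply, Matrix.smul_apply, lowerShift_pow_apply,
    smul_eq_mul, mul_ite, mul_one, mul_zero]
  split_ifs with hlj
  · rw [Finset.sum_eq_single (j - l : ℕ) (by grind), if_pos (by lia)]
    intro hm
    have hchoose : m.choose (j - l) = 0 := Nat.choose_eq_zero_of_lt (by grind)
    rw [hchoose, Nat.cast_zero, zero_mul, zero_mul, ite_self]
  · exact Finset.sum_eq_zero (by grind)

theorem Lam_apply_of_lt {B : ℕ} (lam : ℝ) {j : Fin (B + 1)} (hj : (j : ℕ) < B)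
    (l : Fin (B + 1)) :
    Lam B lam j l = ((1 - lam) • 1 + lam • lowerShift ℝ (B + 1)) j l := by
  simp only [Lam, of_apply, Matrix.add_apply, Matrix.smul_apply, one_apply, lowerShift_apply,
    smul_eq_mul]
  grind

theorem Lam_apply_eq_zero_of_lt {B : ℕ} (lam : ℝ) {j l : Fin (B + 1)} (hjl : j < l) :
    Lam B lam j l = 0 := by
  simp only [Lam, of_apply]
  rw [if_neg (by lia), if_neg (by lia)]

theorem Lam_pow_apply_of_lt {B : ℕ} (lam : ℝ) (m : ℕ) {j : Fin (B + 1)} (hj : (j : ℕ) < B)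
    (l : Fin (B + 1)) :
    (Lam B lam ^ m) j l =
      if l ≤ j then m.choose (j - l) * lam ^ (j - l : ℕ) * (1 - lam) ^ (m - (j - l)) else 0 := by
  rw [← smul_one_add_smul_lowerShift_pow_apply]
  let s : Set (Fin (B + 1)) := {i | (i : ℕ) < B}
  have hs : ∀ i ∈ s, ∀ k ∉ s, Lam B lam i k = 0 := fun i hi k hk =>
    Lam_apply_eq_zero_of_lt lam (Fin.lt_def.mpr (lt_of_lt_of_le hi (not_lt.mp hk)))
  exact pow_apply_eq_of_rows_eq (fun i hi => Lam_apply_of_lt lam hi) hs m hj l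

/-- For 0 ≤ λ ≤ 1, the entries of Λ^m above the last row decay geometrically:
for j < B, any l, and m ≥ max(B, 1), we have 0 ≤ (Λ^m)_{j,l} ≤ m^B (1-λ)^(m-B). -/
theorem Lam_pow_geometric_bound (B : ℕ) (hB : 1 ≤ B) (lam : ℝ)
    (h0 : 0 ≤ lam) (h1 : lam ≤ 1) (j l : Fin (B+1)) (hjB : (j : ℕ) < B)
    (m : ℕ) (hmB : B ≤ m) (hm1 : 1 ≤ m) :
    0 ≤ (Lam B lam ^ m) j l ∧
      (Lam B lam ^ m) j l ≤ (m : ℝ) ^ B * (1 - lam) ^ (m - B) := by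
  have hdiag₀ : 0 ≤ 1 - lam := sub_nonneg.mpr h1
  have hdiag₁ : 1 - lam ≤ 1 := sub_le_self 1 h0
  rw [Lam_pow_apply_of_lt lam m hjB]
  split_ifs
  · exact ⟨by positivity, choose_mul_pow_mul_pow_le h0 h1 hdiag₀ hdiag₁ hm1 (by lia)⟩
  · exact ⟨le_rfl, by positivity⟩
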